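/- Let K ≥ 2, Σ ∈ ℰ, T ~ N(0,Σ), and consider the uniform design D_i = g(T_i). Then for every arm k, the Horvitz–Thompson estimator τ̂_k = (K/n)Σ_i 1{D_i=k}Y_i(k) satisfies Var(τ̂_k) = (K²/n²) · Y(k)ᵀ f_k(Σ) Y(k), with f_k applied entrywise. -/

import Mathlib

open MeasureTheory ProbabilityTheory Matrix Real
open scoped BigOperators ENNReal NNReal

noncomputable section

/-- Variance of a real random variable on a measure space. -/
def var {Ω : Type*} [MeasureSpace Ω] (U : Ω → ℝ) : ℝ :=
  ∫ ω, (U ω - ∫ ω', U ω') ^ 2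

/-- The standard normal CDF `Φ`. -/
def stdGaussianCDF (x : ℝ) : ℝ := (gaussianReal 0 1 (Set.Iic x)).toReal

/-- The set of values `t` mapped by the Gaussianization map `g` to arm `k`
(arms are `0`-indexed: `k : Fin K` represents arm `k+1`; `q m = Φ⁻¹(m/K)`). -/
def armSet (q : ℕ → ℝ) (K : ℕ) (k : Fin K) : Set ℝ :=
  if k.val = 0 then Set.Iic (q 1)
  else if k.val = K - 1 then Set.Ioi (q (K - 1))
  else Set.Ioc (q k.val) (q (k.val + 1))

/-- The function `r_{i,j}(ρ)`. -/
def rfun (q : ℕ → ℝ) (i j : ℕ) (ρ : ℝ) : ℝ :=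
  ∫ r in (0 : ℝ)..ρ,
    (2 * π * Real.sqrt (1 - r ^ 2))⁻¹ *
      Real.exp (-((q i ^ 2 + q j ^ 2 - 2 * r * q i * q j) / (2 * (1 - r ^ 2))))

/-- The function `f_k` (arms `0`-indexed: `k : Fin K` represents arm `k+1`). -/
def fkfun (q : ℕ → ℝ) (K : ℕ) (k : Fin K) (ρ : ℝ) : ℝ :=
  if k.val = 0 then rfun q 1 1 ρ
  else if k.val = K - 1 then rfun q (K - 1) (K - 1) ρ
  else rfun q k.val k.val ρ + rfun q (k.val + 1) (k.val + 1) ρ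
    - 2 * rfun q k.val (k.val + 1) ρ

lemma aux_sqrt {ρ : ℝ} (h : ρ ^ 2 ≤ 1) : √(1 - ρ ^ 2) ^ 2 = 1 - ρ ^ 2 :=
  Real.sq_sqrt (by linarith)

lemma charfun_one (c : ℝ) :
    ∫ x, Complex.exp (((c * x : ℝ) : ℂ) * Complex.I) ∂(gaussianReal 0 1) =
      Complex.exp (-(c : ℂ) ^ 2 / 2) := by
  have := charFun_gaussianReal (μ := 0) (v := 1) c
  rw [charFun_apply_real] at this
  push_cast
  rw [this]
  congr 1
  simp
  ring

lemma law_pair {ι : Type*} [Fintype ι] (u v : ι → ℝ) (ρ : ℝ) (hρ : ρ ^ 2 ≤ 1)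
    (hu : ∑ l, u l ^ 2 = 1) (hv : ∑ l, v l ^ 2 = 1) (huv : ∑ l, u l * v l = ρ) :
    Measure.map (fun z : ι → ℝ => (∑ l, u l * z l, ∑ l, v l * z l))
      (Measure.pi fun _ : ι => gaussianReal 0 1) =
    Measure.map (fun p : ℝ × ℝ => (p.1, ρ * p.1 + √(1 - ρ ^ 2) * p.2))
      ((gaussianReal 0 1).prod (gaussianReal 0 1)) := by
  have m1 : Measurable (fun z : ι → ℝ => (∑ l, u l * z l, ∑ l, v l * z l)) := by fun_prop
  have m2 : Measurable (fun p : ℝ × ℝ => (p.1, ρ * p.1 + √(1 - ρ ^ 2) * p.2)) := by fun_prop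
  have : IsProbabilityMeasure (Measure.map (fun z : ι → ℝ => (∑ l, u l * z l, ∑ l, v l * z l))
      (Measure.pi fun _ : ι => gaussianReal 0 1)) :=
    Measure.isProbabilityMeasure_map m1.aemeasurable
  have : IsProbabilityMeasure (Measure.map
      (fun p : ℝ × ℝ => (p.1, ρ * p.1 + √(1 - ρ ^ 2) * p.2))
      ((gaussianReal 0 1).prod (gaussianReal 0 1))) :=
    Measure.isProbabilityMeasure_map m2.aemeasurable
  apply Measure.ext_of_charFunDual
  ext L
  have hL : ∀ x y : ℝ, L (x, y) = L (1, 0) * x + L (0, 1) * y := by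
    intro x y
    have : ((x, y) : ℝ × ℝ) = x • ((1, 0) : ℝ × ℝ) + y • ((0, 1) : ℝ × ℝ) := by
      ext <;> simp
    rw [this, map_add, map_smul, map_smul]
    simp [mul_comm]
  generalize hα : L (1, 0) = α at hL
  generalize hβ : L (0, 1) = β at hL
  rw [charFunDual_apply, charFunDual_apply, integral_map m1.aemeasurable (by fun_prop),
    integral_map m2.aemeasurable (by fun_prop)]
  simp only [hL]
  have e1 : ∀ z : ι → ℝ, Complex.exp (((α * ∑ l, u l * z l + β * ∑ l, v l * z l : ℝ) : ℂ) * Complex.I)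
      = ∏ l, Complex.exp ((((α * u l + β * v l) * z l : ℝ) : ℂ) * Complex.I) := by
    intro z
    rw [← Complex.exp_sum, ← Finset.sum_mul, ← Complex.ofReal_sum]
    congr 3
    rw [Finset.mul_sum, Finset.mul_sum, ← Finset.sum_add_distrib]
    exact Finset.sum_congr rfl fun _ _ => by ring
  have e2 : ∀ p : ℝ × ℝ, Complex.exp (((α * p.1 + β * (ρ * p.1 + √(1 - ρ ^ 2) * p.2) : ℝ) : ℂ) * Complex.I)
      = Complex.exp ((((α + β * ρ) * p.1 : ℝ) : ℂ) * Complex.I) *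
        Complex.exp ((((β * √(1 - ρ ^ 2)) * p.2 : ℝ) : ℂ) * Complex.I) := by
    intro p
    rw [← Complex.exp_add]
    congr 1
    push_cast
    ring
  simp_rw [e1, e2]
  rw [integral_fintype_prod_eq_prod
    (f := fun l (x : ℝ) => Complex.exp ((((α * u l + β * v l) * x : ℝ) : ℂ) * Complex.I)),
    integral_prod_mul
    (f := fun x : ℝ => Complex.exp ((((α + β * ρ) * x : ℝ) : ℂ) * Complex.I))
    (g := fun x : ℝ => Complex.exp ((((β * √(1 - ρ ^ 2)) * x : ℝ) : ℂ) * Complex.I))]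
  simp only [charfun_one]
  rw [← Complex.exp_sum, ← Complex.exp_add]
  congr 1
  have k1 : ∑ l, (α * u l + β * v l) ^ 2 = α ^ 2 + 2 * α * β * ρ + β ^ 2 := by
    have : ∀ l, (α * u l + β * v l) ^ 2 =
      α ^ 2 * u l ^ 2 + 2 * α * β * (u l * v l) + β ^ 2 * v l ^ 2 := fun l => by ring
    simp only [this, Finset.sum_add_distrib, ← Finset.mul_sum, hu, hv, huv]
    ring
  have k2 : (α + β * ρ) ^ 2 + (β * √(1 - ρ ^ 2)) ^ 2 = α ^ 2 + 2 * α * β * ρ + β ^ 2 := by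
    rw [mul_pow, aux_sqrt hρ]; ring
  rw [← Finset.sum_div, Finset.sum_neg_distrib, ← add_div, ← neg_add]
  congr 2
  exact_mod_cast k1.trans k2.symm

def phi (x : ℝ) : ℝ := (√(2 * π))⁻¹ * Real.exp (-x ^ 2 / 2)

lemma phi_eq : gaussianPDFReal 0 1 = phi := by
  ext x; simp [gaussianPDFReal, phi]

lemma phi_cont : Continuous phi := by unfold phi; fun_prop
lemma phi_nonneg (x : ℝ) : 0 ≤ phi x := by unfold phi; positivity
lemma phi_int : Integrable phi := phi_eq ▸ integrable_gaussianPDFReal 0 1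

lemma phi_le (x : ℝ) : phi x ≤ 1 := by
  unfold phi
  have h1 : (√(2 * π))⁻¹ ≤ 1 := by
    apply inv_le_one_of_one_le₀
    rw [Real.one_le_sqrt]
    nlinarith [Real.pi_gt_three]
  have h2 : Real.exp (-x ^ 2 / 2) ≤ 1 := by
    rw [Real.exp_le_one_iff]; nlinarith [sq_nonneg x]
  exact mul_le_one₀ h1 (by positivity) h2

lemma cdf_eq (x : ℝ) : stdGaussianCDF x = ∫ t in Set.Iic x, phi t := by
  unfold stdGaussianCDF
  rw [gaussianReal_apply_eq_integral _ one_ne_zero, phi_eq, ENNReal.toReal_ofReal]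
  exact integral_nonneg fun x => phi_nonneg x

lemma cdf_deriv (x : ℝ) : HasDerivAt stdGaussianCDF (phi x) x := by
  have : stdGaussianCDF = fun x => (∫ t in Set.Iic (0:ℝ), phi t) + ∫ t in (0:ℝ)..x, phi t := by
    ext x
    rw [cdf_eq, ← intervalIntegral.integral_Iic_sub_Iic phi_int.integrableOn phi_int.integrableOn]
    ring
  rw [this]
  exact (intervalIntegral.integral_hasDerivAt_right (phi_int.intervalIntegrable)
    (phi_cont.stronglyMeasurableAtFilter _ _) phi_cont.continuousAt).const_add _

lemma cdf_cont : Continuous stdGaussianCDF :=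
  continuous_iff_continuousAt.2 fun x => (cdf_deriv x).continuousAt

/-- bivariate density -/
def dens (a b r : ℝ) : ℝ := (2 * π * Real.sqrt (1 - r ^ 2))⁻¹ *
      Real.exp (-((a ^ 2 + b ^ 2 - 2 * r * a * b) / (2 * (1 - r ^ 2))))

lemma dens_eq (x b r : ℝ) (h : r ^ 2 < 1) :
    dens x b r = phi x * phi ((b - r * x) / √(1 - r ^ 2)) / √(1 - r ^ 2) := by
  have h1 : 0 < 1 - r ^ 2 := by linarith
  have h2 : √(2 * π) * √(2 * π) = 2 * π := Real.mul_self_sqrt (by positivity)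
  have h3 : √(1 - r ^ 2) ^ 2 = 1 - r ^ 2 := aux_sqrt h.le
  unfold dens phi
  have : Real.exp (-((x ^ 2 + b ^ 2 - 2 * r * x * b) / (2 * (1 - r ^ 2)))) =
     Real.exp (-x ^ 2 / 2) * Real.exp (-((b - r * x) / √(1 - r ^ 2)) ^ 2 / 2) := by
    rw [← Real.exp_add]
    congr 1
    rw [div_pow, h3]
    field_simp
    ring
  have h4 : 0 < √(1 - r ^ 2) := Real.sqrt_pos.2 h1
  have h5 : (2 * π)⁻¹ = (√(2 * π))⁻¹ * (√(2 * π))⁻¹ := by rw [← mul_inv, h2]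
  rw [this, mul_inv, h5]
  ring

lemma arg_deriv (x b r : ℝ) (h : r ^ 2 < 1) :
    HasDerivAt (fun r => (b - r * x) / √(1 - r ^ 2))
      ((r * b - x) / ((1 - r ^ 2) * √(1 - r ^ 2))) r := by
  have h1 : 0 < 1 - r ^ 2 := by linarith
  have h3 : √(1 - r ^ 2) ^ 2 = 1 - r ^ 2 := aux_sqrt h.le
  have h4 : 0 < √(1 - r ^ 2) := Real.sqrt_pos.2 h1
  have d1 : HasDerivAt (fun r : ℝ => b - r * x) (-x) r := by
    simpa using ((hasDerivAt_id r).mul_const x).const_sub b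
  have d2 : HasDerivAt (fun r : ℝ => 1 - r ^ 2) (-(2 * r)) r := by
    simpa using (hasDerivAt_pow 2 r).const_sub 1
  refine (d1.div (d2.sqrt h1.ne') h4.ne').congr_deriv ?_
  rw [h3]
  field_simp
  rw [h3]
  ring

lemma F_deriv (x b r : ℝ) (h : r ^ 2 < 1) :
    HasDerivAt (fun r => phi x * stdGaussianCDF ((b - r * x) / √(1 - r ^ 2)))
      (dens x b r * ((r * b - x) / (1 - r ^ 2))) r := by
  have h1 : 0 < 1 - r ^ 2 := by linarith
  have h4 : 0 < √(1 - r ^ 2) := Real.sqrt_pos.2 h1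
  refine (((cdf_deriv _).comp r (arg_deriv x b r h)).const_mul (phi x)).congr_deriv ?_
  rw [dens_eq x b r h]
  field_simp

lemma dens_deriv (x b r : ℝ) (h : r ^ 2 < 1) :
    HasDerivAt (fun x => dens x b r) (dens x b r * ((r * b - x) / (1 - r ^ 2))) x := by
  have h1 : 0 < 1 - r ^ 2 := by linarith
  unfold dens
  have d : HasDerivAt (fun x : ℝ => -((x ^ 2 + b ^ 2 - 2 * r * x * b) / (2 * (1 - r ^ 2))))
      ((r * b - x) / (1 - r ^ 2)) x := by
    have := ((((hasDerivAt_pow 2 x).add_const (b ^ 2)).sub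
      (((hasDerivAt_id x).const_mul (2 * r)).mul_const b)).div_const (2 * (1 - r ^ 2))).neg
    refine this.congr_deriv ?_
    field_simp
    simp
    ring
  refine ((d.exp).const_mul ((2 * π * Real.sqrt (1 - r ^ 2))⁻¹)).congr_deriv ?_
  ring

lemma dens_le (x b r : ℝ) (h : r ^ 2 < 1) : dens x b r ≤ phi x / √(1 - r ^ 2) := by
  rw [dens_eq x b r h]
  gcongr
  exact mul_le_of_le_one_right (phi_nonneg x) (phi_le _)

lemma dens_nonneg (x b r : ℝ) : 0 ≤ dens x b r := by
  unfold dens; positivity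

lemma phi_tendsto : Filter.Tendsto phi Filter.atBot (nhds 0) := by
  unfold phi
  rw [← mul_zero (√(2 * π))⁻¹]
  apply Filter.Tendsto.const_mul
  apply Real.tendsto_exp_atBot.comp
  have : (fun x : ℝ => -x ^ 2 / 2) = fun x => -(x ^ 2 / 2) := by ext; ring
  rw [this]
  apply Filter.tendsto_neg_atTop_atBot.comp
  apply Filter.Tendsto.atTop_div_const (by norm_num)
  simpa [Function.comp_def] using (Filter.tendsto_pow_atTop two_ne_zero).comp (Filter.tendsto_abs_atBot_atTop (G := ℝ))

lemma xphi_int (c : ℝ) : Integrable (fun x => phi x * (c + |x|)) := by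
  have h : Integrable (fun x : ℝ => x * Real.exp (-(1/2) * x ^ 2)) :=
    integrable_mul_exp_neg_mul_sq (by norm_num)
  have h2 : Integrable (fun x => phi x * |x|) := by
    have := (h.norm).const_mul ((√(2 * π))⁻¹)
    refine this.congr (Filter.Eventually.of_forall fun x => ?_)
    simp only [phi, norm_mul, Real.norm_eq_abs, Real.abs_exp]
    rw [mul_comm |x|, mul_assoc]
    congr 3
    ring
  have := (phi_int.mul_const c).add h2
  refine this.congr (Filter.Eventually.of_forall fun x => ?_)
  simp; ring

/-- F -/
def FF (a b r : ℝ) : ℝ := ∫ x in Set.Iic a, phi x * stdGaussianCDF ((b - r * x) / √(1 - r ^ 2))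

lemma cdf_nonneg (x : ℝ) : 0 ≤ stdGaussianCDF x := ENNReal.toReal_nonneg
lemma cdf_le (x : ℝ) : stdGaussianCDF x ≤ 1 := by
  have := prob_le_one (μ := gaussianReal 0 1) (s := Set.Iic x)
  exact ENNReal.toReal_le_of_le_ofReal zero_le_one (by simpa using this)

lemma FF_deriv (a b r : ℝ) (h : r ^ 2 < 1) : HasDerivAt (FF a b) (dens a b r) r := by
  obtain ⟨R, hR1, hR2⟩ := exists_between h
  have hs : {s : ℝ | s ^ 2 < R} ∈ nhds r :=
    (isOpen_lt (by fun_prop) (by fun_prop)).mem_nhds hR1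
  have hmeas : ∀ s : ℝ, Measurable (fun x => phi x * stdGaussianCDF ((b - s * x) / √(1 - s ^ 2))) := by
    intro s
    exact (phi_cont.mul (cdf_cont.comp (by fun_prop))).measurable
  have key := hasDerivAt_integral_of_dominated_loc_of_deriv_le
    (μ := volume.restrict (Set.Iic a)) (𝕜 := ℝ) (E := ℝ) (x₀ := r) (s := {s : ℝ | s ^ 2 < R})
    (F := fun s x => phi x * stdGaussianCDF ((b - s * x) / √(1 - s ^ 2)))
    (F' := fun s x => dens x b s * ((s * b - x) / (1 - s ^ 2)))
    (bound := fun x => (phi x * (|b| + |x|)) * (1 / (√(1 - R) * (1 - R)))) hs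
    (Filter.Eventually.of_forall fun s => (hmeas s).aestronglyMeasurable)
    (by
      apply Integrable.mono' phi_int.restrict (hmeas r).aestronglyMeasurable
      refine Filter.Eventually.of_forall fun x => ?_
      rw [Real.norm_eq_abs, abs_of_nonneg (mul_nonneg (phi_nonneg _) (cdf_nonneg _))]
      exact mul_le_of_le_one_right (phi_nonneg x) (cdf_le _))
    (by
      apply Measurable.aestronglyMeasurable
      unfold dens
      fun_prop)
    (by
      refine Filter.Eventually.of_forall fun x s hs => ?_
      have hs : s ^ 2 < R := hs
      have hs1 : s ^ 2 < 1 := hs.trans hR2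
      have hR0 : 0 < 1 - R := by linarith
      have h1 : 0 < 1 - s ^ 2 := by linarith
      rw [Real.norm_eq_abs, abs_mul, abs_div, abs_of_pos h1, abs_of_nonneg (dens_nonneg _ _ _)]
      have e1 : dens x b s ≤ phi x / √(1 - R) := by
        refine (dens_le x b s hs1).trans ?_
        have := phi_nonneg x
        have : 0 < √(1 - R) := Real.sqrt_pos.2 hR0
        gcongr
      have e2 : |s * b - x| ≤ |b| + |x| := by
        refine (abs_sub _ _).trans ?_
        rw [abs_mul]
        have : |s| ≤ 1 := by rw [← sq_le_one_iff_abs_le_one]; exact hs1.le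
        have := abs_nonneg b
        nlinarith
      calc dens x b s * (|s * b - x| / (1 - s ^ 2))
          ≤ (phi x / √(1 - R)) * ((|b| + |x|) / (1 - R)) := by
            have := phi_nonneg x
            gcongr
        _ = _ := by
            have : 0 < √(1 - R) := Real.sqrt_pos.2 hR0
            field_simp)
    (((xphi_int |b|).mul_const _).restrict)
    (by
      refine Filter.Eventually.of_forall fun x s hs => ?_
      have hs : s ^ 2 < R := hs
      exact F_deriv x b s (hs.trans hR2))
  have h2 : ∫ x in Set.Iic a, dens x b r * ((r * b - x) / (1 - r ^ 2)) = dens a b r - 0 := by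
    apply integral_Iic_of_hasDerivAt_of_tendsto' (f := fun x => dens x b r)
    · intro x _
      exact dens_deriv x b r h
    · exact key.1
    · apply squeeze_zero (fun x => dens_nonneg x b r) (fun x => dens_le x b r h)
      simpa using phi_tendsto.div_const (√(1 - r ^ 2))
  rw [sub_zero] at h2
  rw [← h2]
  exact key.2

def ind (a x : ℝ) : ℝ := if x ≤ a then 1 else 0

lemma ind_nonneg (a x : ℝ) : 0 ≤ ind a x := by unfold ind; split_ifs <;> simp
lemma ind_le (a x : ℝ) : ind a x ≤ 1 := by unfold ind; split_ifs <;> simp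
lemma ind_meas (a : ℝ) : Measurable (ind a) :=
  Measurable.ite measurableSet_Iic measurable_const measurable_const
lemma ind_eq (a : ℝ) : ind a = (Set.Iic a).indicator 1 := by
  ext x; simp [ind, Set.indicator_apply]

def GG (a b r : ℝ) : ℝ := ∫ p : ℝ × ℝ, ind a p.1 * ind b (r * p.1 + √(1 - r ^ 2) * p.2)
  ∂((gaussianReal 0 1).prod (gaussianReal 0 1))

lemma GG_meas (a b r : ℝ) :
    Measurable (fun p : ℝ × ℝ => ind a p.1 * ind b (r * p.1 + √(1 - r ^ 2) * p.2)) :=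
  ((ind_meas a).comp measurable_fst).mul ((ind_meas b).comp (by fun_prop))

lemma GG_norm (a b x y : ℝ) : ‖ind a x * ind b y‖ ≤ 1 := by
  rw [Real.norm_eq_abs, abs_of_nonneg (mul_nonneg (ind_nonneg _ _) (ind_nonneg _ _))]
  exact mul_le_one₀ (ind_le _ _) (ind_nonneg _ _) (ind_le _ _)

lemma int_ind (b : ℝ) : ∫ x, ind b x ∂(gaussianReal 0 1) = stdGaussianCDF b := by
  rw [ind_eq, integral_indicator_one measurableSet_Iic]; rfl

lemma GG_eq_FF (a b r : ℝ) (h : r ^ 2 < 1) : GG a b r = FF a b r := by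
  have h1 : 0 < 1 - r ^ 2 := by linarith
  have h4 : 0 < √(1 - r ^ 2) := Real.sqrt_pos.2 h1
  unfold GG FF
  rw [integral_prod _ (Integrable.of_bound (GG_meas a b r).aestronglyMeasurable 1
    (Filter.Eventually.of_forall fun p => GG_norm _ _ _ _))]
  have e : ∀ x y : ℝ, ind b (r * x + √(1 - r ^ 2) * y) = ind ((b - r * x) / √(1 - r ^ 2)) y := by
    intro x y
    unfold ind
    congr 1
    rw [le_div_iff₀ h4, eq_iff_iff]
    constructor <;> intro h <;> linarith
  simp only [e, integral_const_mul, int_ind]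
  rw [integral_gaussianReal_eq_integral_smul one_ne_zero, phi_eq, ← integral_indicator measurableSet_Iic]
  congr 1
  ext x
  by_cases hx : x ≤ a <;> simp [ind, Set.indicator_apply, hx]

lemma FF_zero (a b : ℝ) : FF a b 0 = stdGaussianCDF a * stdGaussianCDF b := by
  simp [FF, integral_mul_const, ← cdf_eq]

lemma line_null (c d b : ℝ) (h : c ≠ 0 ∨ d ≠ 0) :
    ∀ᵐ p : ℝ × ℝ ∂((gaussianReal 0 1).prod (gaussianReal 0 1)), c * p.1 + d * p.2 ≠ b := by
  have hna : NullSingletonClass (gaussianReal 0 1) := nullSingletonClass_gaussianReal one_ne_zero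
  have hna' : ∀ t : ℝ, ∀ᵐ x ∂(gaussianReal 0 1), x ≠ t := fun t => by
    simp [ae_iff]
  by_cases hd : d = 0
  · have hc : c ≠ 0 := by simpa [hd] using h
    have := Measure.quasiMeasurePreserving_fst (μ := gaussianReal 0 1) (ν := gaussianReal 0 1)
      |>.ae (hna' (b / c))
    filter_upwards [this] with p hp
    rw [hd]
    intro hh
    apply hp
    rw [eq_div_iff hc]
    linarith
  · have hm : MeasurableSet {p : ℝ × ℝ | c * p.1 + d * p.2 ≠ b} :=
      (measurableSet_eq_fun (by fun_prop) (by fun_prop)).compl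
    rw [Measure.ae_prod_iff_ae_ae hm]
    refine Filter.Eventually.of_forall fun x => ?_
    filter_upwards [hna' ((b - c * x) / d)] with y hy hh
    apply hy
    rw [eq_div_iff hd]
    linarith

lemma ind_cont (b x : ℝ) (h : x ≠ b) : ContinuousAt (ind b) x := by
  rcases lt_or_gt_of_ne h with h | h
  · refine (continuousAt_const (y := (1 : ℝ))).congr ?_
    filter_upwards [Iio_mem_nhds h] with y hy
    simp [ind, (Set.mem_Iio.1 hy).le]
  · refine (continuousAt_const (y := (0 : ℝ))).congr ?_
    filter_upwards [Ioi_mem_nhds h] with y hy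
    simp [ind, Set.mem_Ioi.1 hy]

lemma GG_cont (a b : ℝ) : Continuous (GG a b) := by
  rw [continuous_iff_continuousAt]
  intro r
  unfold GG
  apply continuousAt_of_dominated (bound := fun _ => 1)
  · exact Filter.Eventually.of_forall fun s => (GG_meas a b s).aestronglyMeasurable
  · exact Filter.Eventually.of_forall fun s => Filter.Eventually.of_forall fun p => GG_norm _ _ _ _
  · exact integrable_const _
  · have h : r ≠ 0 ∨ √(1 - r ^ 2) ≠ 0 := by
      by_cases hr : r = 0
      · right; simp [hr]
      · exact Or.inl hr
    filter_upwards [line_null _ _ b h] with p hp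
    apply ContinuousAt.mul continuousAt_const
    exact ContinuousAt.comp (f := fun s : ℝ => s * p.1 + √(1 - s ^ 2) * p.2) (ind_cont b _ hp)
      (by fun_prop)

lemma GG_deriv (a b r : ℝ) (h : r ^ 2 < 1) : HasDerivAt (GG a b) (dens a b r) r := by
  refine (FF_deriv a b r h).congr_of_eventuallyEq ?_
  filter_upwards [(isOpen_lt (f := fun s : ℝ => s ^ 2) (g := fun _ => (1:ℝ)) (by fun_prop)
    (by fun_prop)).mem_nhds h] with s hs
  exact GG_eq_FF a b s hs

lemma GG_ftc (a b u v : ℝ) (huv : u ≤ v) (hu : -1 ≤ u) (hv : v ≤ 1) :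
    ∫ r in u..v, dens a b r = GG a b v - GG a b u := by
  have hd : ∀ x ∈ Set.Ioo u v, HasDerivAt (GG a b) (dens a b x) x := fun x hx =>
    GG_deriv a b x (by
      rw [sq_lt_one_iff_abs_lt_one, abs_lt]
      exact ⟨by linarith [hx.1], by linarith [hx.2]⟩)
  apply intervalIntegral.integral_eq_sub_of_hasDerivAt_of_le huv (GG_cont a b).continuousOn hd
  apply intervalIntegral.intervalIntegrable_deriv_of_nonneg (g := GG a b) (GG_cont a b).continuousOn
  · simpa [huv] using hd
  · intro x _
    exact dens_nonneg _ _ _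

lemma GG_main (a b r : ℝ) (h : r ^ 2 ≤ 1) :
    GG a b r - stdGaussianCDF a * stdGaussianCDF b = ∫ s in (0:ℝ)..r, dens a b s := by
  rw [sq_le_one_iff_abs_le_one, abs_le] at h
  rw [← FF_zero, ← GG_eq_FF a b 0 (by norm_num)]
  rcases le_total 0 r with h0 | h0
  · rw [GG_ftc a b 0 r h0 (by norm_num) h.2]
  · rw [intervalIntegral.integral_symm, GG_ftc a b r 0 h0 h.1 (by norm_num)]
    ring

lemma cov_ind {Ω : Type*} [MeasureSpace Ω] [IsProbabilityMeasure (volume : Measure Ω)]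
    (n : ℕ) (S : Matrix (Fin n) (Fin n) ℝ) (hSdiag : ∀ i, S i i = 1)
    (A : Matrix (Fin n) (Fin n) ℝ) (hA : A * Aᵀ = S)
    (T : Ω → Fin n → ℝ) (hT : Measurable T)
    (hTlaw : Measure.map T volume =
      Measure.map (fun z => A *ᵥ z) (Measure.pi fun _ : Fin n => gaussianReal 0 1))
    (i j : Fin n) (a b : ℝ) :
    cov[fun ω => ind a (T ω i), fun ω => ind b (T ω j); volume] =
      ∫ s in (0:ℝ)..(S i j), dens a b s := by
  have hS : ∀ i j, ∑ l, A i l * A j l = S i j := by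
    intro i j; rw [← hA]; simp [Matrix.mul_apply]
  have hS1 : ∀ i, ∑ l, A i l ^ 2 = 1 := by
    intro i; rw [← hSdiag i, ← hS]; simp [sq]
  have hS2 : ∀ i j, S i j ^ 2 ≤ 1 := by
    intro i j
    have h1 : 0 ≤ ∑ l, (A i l + A j l) ^ 2 := Finset.sum_nonneg fun _ _ => sq_nonneg _
    have h2 : 0 ≤ ∑ l, (A i l - A j l) ^ 2 := Finset.sum_nonneg fun _ _ => sq_nonneg _
    have e1 : ∀ l, (A i l + A j l) ^ 2 = A i l ^ 2 + 2 * (A i l * A j l) + A j l ^ 2 :=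
      fun l => by ring
    have e2 : ∀ l, (A i l - A j l) ^ 2 = A i l ^ 2 - 2 * (A i l * A j l) + A j l ^ 2 :=
      fun l => by ring
    simp only [e1, e2, Finset.sum_add_distrib, Finset.sum_sub_distrib, ← Finset.mul_sum, hS, hS1]
      at h1 h2
    rw [sq_le_one_iff_abs_le_one, abs_le]
    constructor <;> linarith
  have hTm : ∀ i, Measurable fun ω => T ω i := fun i => (measurable_pi_apply i).comp hT
  have hmem : ∀ a i, MemLp (fun ω => ind a (T ω i)) 2 (volume : Measure Ω) := fun a i =>
    MemLp.of_bound ((ind_meas a).comp (hTm i)).aestronglyMeasurable 1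
      (Filter.Eventually.of_forall fun ω => by
        rw [Real.norm_eq_abs, abs_of_nonneg (ind_nonneg _ _)]; exact ind_le _ _)
  have hlaw : ∀ i j, Measure.map (fun ω => (T ω i, T ω j)) volume =
      Measure.map (fun p : ℝ × ℝ => (p.1, S i j * p.1 + √(1 - S i j ^ 2) * p.2))
        ((gaussianReal 0 1).prod (gaussianReal 0 1)) := by
    intro i j
    rw [← law_pair (A i) (A j) (S i j) (hS2 i j) (hS1 i) (hS1 j) (hS i j)]
    have e1 : (fun ω => (T ω i, T ω j)) = (fun t : Fin n → ℝ => (t i, t j)) ∘ T := rfl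
    have hm : Measurable (fun t : Fin n → ℝ => (t i, t j)) := by fun_prop
    have hm2 : Measurable (fun z : Fin n → ℝ => A *ᵥ z) := by
      unfold Matrix.mulVec dotProduct; fun_prop
    rw [e1, ← Measure.map_map hm hT, hTlaw, Measure.map_map hm hm2]
    rfl
  have hG : ∀ (i j : Fin n) (a b : ℝ), ∫ ω, ind a (T ω i) * ind b (T ω j) = GG a b (S i j) := by
    intro i j a b
    have hm : Measurable (fun p : ℝ × ℝ => ind a p.1 * ind b p.2) :=
      ((ind_meas a).comp measurable_fst).mul ((ind_meas b).comp measurable_snd)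
    have := integral_map (μ := (volume : Measure Ω)) (φ := fun ω => (T ω i, T ω j))
      ((hTm i).prodMk (hTm j)).aemeasurable
      (f := fun p : ℝ × ℝ => ind a p.1 * ind b p.2) hm.aestronglyMeasurable
    rw [← this, hlaw, integral_map (by fun_prop) hm.aestronglyMeasurable]
    rfl
  have hG1 : ∀ (i : Fin n) (a : ℝ), ∫ ω, ind a (T ω i) = stdGaussianCDF a := by
    intro i a
    have hm : Measurable (fun p : ℝ × ℝ => ind a p.1) := (ind_meas a).comp measurable_fst
    have := integral_map (μ := (volume : Measure Ω)) (φ := fun ω => (T ω i, T ω i))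
      ((hTm i).prodMk (hTm i)).aemeasurable
      (f := fun p : ℝ × ℝ => ind a p.1) hm.aestronglyMeasurable
    rw [← this, hlaw, integral_map (by fun_prop) hm.aestronglyMeasurable]
    simp only
    rw [integral_fun_fst (f := ind a), int_ind]
    simp
  rw [covariance_eq_sub (hmem a i) (hmem b j), ← GG_main a b _ (hS2 i j), hG1, hG1, ← hG]
  rfl

lemma rfun_eq (q : ℕ → ℝ) (i j : ℕ) (ρ : ℝ) :
    rfun q i j ρ = ∫ s in (0:ℝ)..ρ, dens (q i) (q j) s := rfl

lemma dens_comm (a b r : ℝ) : dens a b r = dens b a r := by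
  unfold dens; congr 4; ring

lemma rfun_comm (q : ℕ → ℝ) (i j : ℕ) (ρ : ℝ) : rfun q i j ρ = rfun q j i ρ := by
  simp only [rfun_eq, dens_comm (q i)]

lemma cdf_mono : Monotone stdGaussianCDF := fun _ _ h =>
  ENNReal.toReal_mono (measure_ne_top _ _) (measure_mono (Set.Iic_subset_Iic.2 h))

theorem var_HT_gaussianized_eq
    {Ω : Type*} [MeasureSpace Ω] [IsProbabilityMeasure (volume : Measure Ω)]
    (n K : ℕ) (hn : 0 < n) (hK : 2 ≤ K)
    (q : ℕ → ℝ) (hq : ∀ m : ℕ, 0 < m → m < K → stdGaussianCDF (q m) = (m : ℝ) / K)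
    (S : Matrix (Fin n) (Fin n) ℝ) (hSpsd : S.PosSemidef) (hSdiag : ∀ i, S i i = 1)
    (A : Matrix (Fin n) (Fin n) ℝ) (hA : A * Aᵀ = S)
    (T : Ω → Fin n → ℝ) (hT : Measurable T)
    (hTlaw : Measure.map T volume =
      Measure.map (fun z => A *ᵥ z) (Measure.pi fun _ : Fin n => gaussianReal 0 1))
    (D : Ω → Fin n → Fin K)
    (hD : ∀ ω i (k : Fin K), D ω i = k ↔ T ω i ∈ armSet q K k)
    (Y : Fin K → Fin n → ℝ) (k : Fin K) :
    var (fun ω => (K : ℝ) / n * ∑ i, (if D ω i = k then Y k i else 0)) =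
      (K : ℝ) ^ 2 / (n : ℝ) ^ 2 *
        (Y k ⬝ᵥ ((Matrix.of fun i j => fkfun q K k (S i j)) *ᵥ Y k)) := by
  classical
  have hTm : ∀ i, Measurable fun ω => T ω i := fun i => (measurable_pi_apply i).comp hT
  have hmem : ∀ a i, MemLp (fun ω => ind a (T ω i)) 2 (volume : Measure Ω) := fun a i =>
    MemLp.of_bound ((ind_meas a).comp (hTm i)).aestronglyMeasurable 1
      (Filter.Eventually.of_forall fun ω => by
        rw [Real.norm_eq_abs, abs_of_nonneg (ind_nonneg _ _)]; exact ind_le _ _)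
  have hint : ∀ a i, Integrable (fun ω => ind a (T ω i)) (volume : Measure Ω) := fun a i =>
    (hmem a i).integrable (by norm_num)
  have hc := cov_ind n S hSdiag A hA T hT hTlaw
  have hc' : ∀ i j m m', cov[fun ω => ind (q m) (T ω i), fun ω => ind (q m') (T ω j); volume] =
      rfun q m m' (S i j) := fun i j m m' => hc i j (q m) (q m')
  -- arm indicator
  have key : ∃ X : Fin n → Ω → ℝ, (∀ i, MemLp (X i) 2 (volume : Measure Ω)) ∧
      (∀ i ω, X i ω = if D ω i = k then 1 else 0) ∧
      (∀ i j, cov[X i, X j; volume] = fkfun q K k (S i j)) := by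
    simp only [hD]
    unfold armSet fkfun
    by_cases h0 : k.val = 0
    · simp only [h0, if_true]
      exact ⟨fun i ω => ind (q 1) (T ω i), fun i => hmem _ i, fun i ω => by simp [ind],
        fun i j => hc' i j 1 1⟩
    by_cases h1 : k.val = K - 1
    · simp only [h0, h1, if_true, if_false]
      have h2 : K - 1 ≠ 0 := by omega
      simp only [h2, if_false]
      refine ⟨fun i ω => 1 - ind (q (K - 1)) (T ω i), fun i => (memLp_const 1).sub (hmem _ i),
        fun i ω => ?_, fun i j => ?_⟩
      · by_cases h : T ω i ≤ q (K - 1)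
        · simp [ind, h]
        · simp [ind, h, not_le.1 h]
      · rw [covariance_const_sub_left (hint _ i), covariance_const_sub_right (hint _ j), neg_neg,
          hc']
    · simp only [h0, h1, if_false]
      have hlt : k.val + 1 < K := by have := k.2; omega
      have hle : q k.val ≤ q (k.val + 1) := by
        by_contra hcon
        have := cdf_mono (not_le.1 hcon).le
        rw [hq _ (by omega) hlt, hq _ (by omega) k.2] at this
        have hKpos : (0:ℝ) < K := by positivity
        rw [div_le_div_iff_of_pos_right hKpos] at this
        push_cast at this
        linarith
      refine ⟨fun i ω => ind (q (k.val + 1)) (T ω i) - ind (q k.val) (T ω i),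
        fun i => (hmem _ i).sub (hmem _ i), fun i ω => ?_, fun i j => ?_⟩
      · simp only [ind, Set.mem_Ioc]
        by_cases h : T ω i ≤ q k.val
        · simp [h, h.trans hle, not_lt.2 h]
        · simp [h, not_le.1 h]
      · rw [covariance_fun_sub_fun_sub (hmem _ i) (hmem _ i) (hmem _ j) (hmem _ j)]
        simp only [hc']
        rw [rfun_comm q (k.val + 1) k.val]
        ring
  obtain ⟨X, hXm, hX, hXc⟩ := key
  have e : (fun ω => (K : ℝ) / n * ∑ i, (if D ω i = k then Y k i else 0)) =
      fun ω => (K : ℝ) / n * ∑ i, Y k i * X i ω := by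
    ext ω
    congr 1
    refine Finset.sum_congr rfl fun i _ => ?_
    rw [hX]; simp
  have hm2 : ∀ i, MemLp (fun ω => Y k i * X i ω) 2 (volume : Measure Ω) := fun i =>
    (hXm i).const_mul _
  have hv : var (fun ω => (K : ℝ) / n * ∑ i, Y k i * X i ω) =
      Var[fun ω => (K : ℝ) / n * ∑ i, Y k i * X i ω; volume] := by
    rw [variance_eq_integral]
    · rfl
    · exact ((memLp_finsetSum _ fun i _ => hm2 i).const_mul _).aestronglyMeasurable.aemeasurable
  rw [e, hv, variance_const_mul, variance_fun_sum hm2, div_pow]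
  congr 1
  simp only [covariance_const_mul_left, covariance_const_mul_right, hXc, dotProduct, Matrix.mulVec,
    Matrix.of_apply, Finset.mul_sum]
  refine Finset.sum_congr rfl fun i _ => Finset.sum_congr rfl fun j _ => ?_
  ring

end
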